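/- Let f₁, …, f_k be signomials on ℝⁿ_{>0} such that for every i = 1, …, k and every face F of N(f_i) the following non-boundary condition holds: if f_{i|F}(x) ≥ 0 for all x ∈ ℝⁿ_{>0}, then f_{i|F} lies in the interior of the nonnegativity cone P⁺_{σ(f_i)∩F}. Then Trop(S(f₁, …, f_k)) ⊆ ⋂_{i=1}^{k} Σ(f_i), where S(f₁, …, f_k) = ⋂_{i=1}^{k} f_i^{-1}(ℝ_{<0}). -/

import Mathlib

/-- A signomial on the positive orthant `ℝⁿ_{>0}`: a function
`x ↦ ∑_{μ ∈ supp} coeff μ * x ^ μ` with finite support and nonzero coefficients. -/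
structure Signomial (n : ℕ) where
  supp : Finset (Fin n → ℝ)
  coeff : (Fin n → ℝ) → ℝ
  coeff_ne_zero : ∀ μ ∈ supp, coeff μ ≠ 0
  coeff_eq_zero : ∀ μ ∉ supp, coeff μ = 0

namespace Signomial

variable {n : ℕ}

/-- The monomial `x^μ = ∏ i, x i ^ μ i` (real exponents). -/
noncomputable def mono (x μ : Fin n → ℝ) : ℝ := ∏ i, x i ^ μ i

/-- Evaluation of a signomial. -/
noncomputable def eval (f : Signomial n) (x : Fin n → ℝ) : ℝ :=
  ∑ μ ∈ f.supp, f.coeff μ * mono x μ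

open Classical in
/-- Evaluation of the restriction `f_{|S}` of `f` to a set `S ⊆ ℝⁿ`. -/
noncomputable def evalOn (f : Signomial n) (S : Set (Fin n → ℝ)) (x : Fin n → ℝ) : ℝ :=
  ∑ μ ∈ f.supp, if μ ∈ S then f.coeff μ * mono x μ else 0

/-- The Newton polytope `N(f) = conv(σ(f))`. -/
def newton (f : Signomial n) : Set (Fin n → ℝ) :=
  convexHull ℝ (f.supp : Set (Fin n → ℝ))

/-- Euclidean scalar product on `Fin n → ℝ`. -/
noncomputable def dot (v μ : Fin n → ℝ) : ℝ := ∑ i, v i * μ i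

/-- The face `N(f)_v` of the Newton polytope cut out by `v`. -/
def faceAt (f : Signomial n) (v : Fin n → ℝ) : Set (Fin n → ℝ) :=
  {μ ∈ f.newton | ∀ ν ∈ f.newton, dot v ν ≤ dot v μ}

/-- `F` is a (nonempty, exposed) face of the Newton polytope of `f`. -/
def IsFace (f : Signomial n) (F : Set (Fin n → ℝ)) : Prop :=
  F.Nonempty ∧ ∃ v, F = f.faceAt v

/-- The (outer) normal cone of a face `F` of `N(f)`. -/
def normalCone (f : Signomial n) (F : Set (Fin n → ℝ)) : Set (Fin n → ℝ) :=
  {v | F ⊆ f.faceAt v}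

/-- The negative normal cone `N_f^- = {v | N(f)_v ∩ σ₋(f) ≠ ∅}`. -/
def negCone (f : Signomial n) : Set (Fin n → ℝ) :=
  {v | ∃ μ ∈ f.supp, f.coeff μ < 0 ∧ μ ∈ f.faceAt v}

/-- The positive orthant `ℝⁿ_{>0}`. -/
def posOrth (n : ℕ) : Set (Fin n → ℝ) := {x | ∀ i, 0 < x i}

/-- `S(f) = f⁻¹(ℝ_{<0})` (inside the positive orthant). -/
def negSet₁ (f : Signomial n) : Set (Fin n → ℝ) :=
  {x ∈ posOrth n | f.eval x < 0}

/-- `S(f₁, …, f_k) = ⋂ᵢ fᵢ⁻¹(ℝ_{<0})` (inside the positive orthant). -/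
def negSet {k : ℕ} (f : Fin k → Signomial n) : Set (Fin n → ℝ) :=
  {x ∈ posOrth n | ∀ i, (f i).eval x < 0}

/-- The actual negative normal cone `Σ(f)` of a single signomial. -/
def actualNegCone₁ (f : Signomial n) : Set (Fin n → ℝ) :=
  {v | ∃ x ∈ posOrth n, f.evalOn (f.faceAt v) x < 0}

/-- The actual negative normal cone `Σ(f₁, …, f_k)`. -/
def actualNegCone {k : ℕ} (f : Fin k → Signomial n) : Set (Fin n → ℝ) :=
  {v | ∃ x ∈ posOrth n, ∀ i, (f i).evalOn ((f i).faceAt v) x < 0}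

/-- The real tropicalization (logarithmic limit set) of `S ⊆ ℝⁿ_{>0}`:
`w ∈ Trop(S)` iff there are sequences `x(m) ∈ S`, `t(m) ∈ (1,∞)` with `t(m) → ∞` and
`Log_{t(m)}(x(m)) → w`. -/
def trop (S : Set (Fin n → ℝ)) : Set (Fin n → ℝ) :=
  {w | ∃ (x : ℕ → Fin n → ℝ) (t : ℕ → ℝ),
    (∀ m, x m ∈ S) ∧ (∀ m, 1 < t m) ∧
    Filter.Tendsto t Filter.atTop Filter.atTop ∧
    Filter.Tendsto (fun m i => Real.log (x m i) / Real.log (t m))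
      Filter.atTop (nhds w)}

open Classical in
/-- The support of the restriction `f_{|F}`, i.e. `σ(f) ∩ F`. -/
noncomputable def restSupp (f : Signomial n) (F : Set (Fin n → ℝ)) : Finset (Fin n → ℝ) :=
  f.supp.filter (fun μ => μ ∈ F)

/-- Evaluation of the signomial with coefficient vector `c ∈ ℝ^A`. -/
noncomputable def evalVec (A : Finset (Fin n → ℝ)) (c : A → ℝ) (x : Fin n → ℝ) : ℝ :=
  ∑ μ : A, c μ * mono x (μ : Fin n → ℝ)

/-- The nonnegativity cone `P⁺_A ⊆ ℝ^A`. -/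
def nonnegConeSet (A : Finset (Fin n → ℝ)) : Set (A → ℝ) :=
  {c | ∀ x ∈ posOrth n, 0 ≤ evalVec A c x}

/-- The coefficient vector of `f` viewed in `ℝ^A`. -/
def coeffVec (f : Signomial n) (A : Finset (Fin n → ℝ)) : A → ℝ :=
  fun μ => f.coeff μ

/-- The non-boundary condition (NB): for every face `F` of `N(f)`, if `f_{|F}` is
nonnegative on the positive orthant then it lies in the interior of the nonnegativity
cone `P⁺_{σ(f) ∩ F}`. -/
def NBcond (f : Signomial n) : Prop :=
  ∀ F : Set (Fin n → ℝ), f.IsFace F →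
    coeffVec f (f.restSupp F) ∈ nonnegConeSet (f.restSupp F) →
    coeffVec f (f.restSupp F) ∈ interior (nonnegConeSet (f.restSupp F))

end Signomial

namespace Signomial

theorem aux_mono {n : ℕ} (x μ : Fin n → ℝ) (hx : x ∈ posOrth n) :
    mono x μ = Real.exp (dot (fun i => Real.log (x i)) μ) := by
  unfold mono dot
  rw [Real.exp_sum]
  exact Finset.prod_congr rfl fun i _ => Real.rpow_def_of_pos (hx i) _

theorem aux_max {n : ℕ} (g : Signomial n) (w : Fin n → ℝ) (h : g.supp.Nonempty) :
    ∃ μ ∈ g.supp, μ ∈ g.faceAt w := by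
  obtain ⟨μ, hμ, hmax⟩ := g.supp.exists_max_image (fun ν => dot w ν) h
  refine ⟨μ, hμ, subset_convexHull ℝ _ hμ, ?_⟩
  have hc : Convex ℝ {ν : Fin n → ℝ | dot w ν ≤ dot w μ} := by
    apply convex_halfSpace_le
    constructor
    · intro a b; simp [dot, mul_add, Finset.sum_add_distrib]
    · intro c a
      simp only [dot, Pi.smul_apply, smul_eq_mul, Finset.mul_sum]
      exact Finset.sum_congr rfl fun i _ => by ring
  exact fun ν hν => convexHull_min (fun ν hν => hmax ν hν) hc hν

theorem aux_evalVec {n : ℕ} (g : Signomial n) (F : Set (Fin n → ℝ)) (x : Fin n → ℝ) :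
    evalVec (g.restSupp F) (coeffVec g _) x = g.evalOn F x := by
  classical
  unfold evalVec evalOn coeffVec
  rw [Finset.sum_coe_sort (g.restSupp F) (fun μ => g.coeff μ * mono x μ), restSupp,
    Finset.sum_filter]

theorem aux_interior {n : ℕ} (A : Finset (Fin n → ℝ)) (c : A → ℝ)
    (hc : c ∈ interior (nonnegConeSet A)) :
    ∃ ε > 0, ∀ x ∈ posOrth n, ∀ μ ∈ A, ε * mono x μ ≤ evalVec A c x := by
  rw [mem_interior_iff_mem_nhds, Metric.mem_nhds_iff] at hc
  obtain ⟨δ, hδ, hb⟩ := hc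
  refine ⟨δ / 2, by positivity, fun x hx μ hμ => ?_⟩
  have hm : (fun ν => c ν - δ / 2) ∈ Metric.ball c δ := by
    rw [Metric.mem_ball, dist_pi_lt_iff hδ]
    intro ν
    rw [Real.dist_eq, sub_sub_cancel_left, abs_neg, abs_of_pos (by positivity)]
    linarith
  have h1 := hb hm x hx
  have hp : ∀ ν : A, 0 ≤ mono x ν := fun ν => by rw [aux_mono x _ hx]; positivity
  have h2 := Finset.single_le_sum (f := fun ν : A => mono x ν) (fun ν _ => hp ν)
    (Finset.mem_univ ⟨μ, hμ⟩)
  simp only [evalVec, sub_mul, Finset.sum_sub_distrib, ← Finset.mul_sum] at h1 ⊢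
  have h3 := mul_le_mul_of_nonneg_left h2 (by positivity : 0 ≤ δ / 2)
  simp only at h3
  linarith

open Filter in
theorem aux_main {n : ℕ} (g : Signomial n) (hNB : NBcond g) (w : Fin n → ℝ)
    (x : ℕ → Fin n → ℝ) (t : ℕ → ℝ) (hx : ∀ m, x m ∈ posOrth n)
    (hneg : ∀ m, g.eval (x m) < 0) (ht1 : ∀ m, 1 < t m) (ht : Tendsto t atTop atTop)
    (hw : Tendsto (fun m i => Real.log (x m i) / Real.log (t m)) atTop (nhds w)) :
    w ∈ actualNegCone₁ g := by
  classical
  by_contra hcon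
  have hnn : ∀ y ∈ posOrth n, 0 ≤ g.evalOn (g.faceAt w) y := by
    intro y hy
    by_contra h
    exact hcon ⟨y, hy, not_le.mp h⟩
  have hne : g.supp.Nonempty := by
    by_contra h
    rw [Finset.not_nonempty_iff_eq_empty] at h
    have := hneg 0
    simp [eval, h] at this
  obtain ⟨μ, hμ, hμF⟩ := aux_max g w hne
  obtain ⟨ε, hε, hle⟩ := aux_interior _ _ (hNB (g.faceAt w) ⟨⟨μ, hμF⟩, w, rfl⟩
    (fun y hy => by rw [aux_evalVec]; exact hnn y hy))
  have hL : Tendsto (fun m => Real.log (t m)) atTop atTop := Real.tendsto_log_atTop.comp ht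
  have hdot : ∀ ν, Tendsto (fun m => dot (fun i => Real.log (x m i) / Real.log (t m)) ν) atTop
      (nhds (dot w ν)) := by
    intro ν
    unfold dot
    exact tendsto_finsetSum _ fun i _ => ((tendsto_pi_nhds.mp hw) i).mul_const _
  have hlim : ∀ ν ∈ g.supp, ν ∉ g.faceAt w →
      Tendsto (fun m => mono (x m) ν / mono (x m) μ) atTop (nhds 0) := by
    intro ν hν hνF
    have hlt : dot w ν - dot w μ < 0 := by
      have hνN : ν ∈ g.newton := subset_convexHull ℝ _ hν
      by_contra h
      exact hνF ⟨hνN, fun ρ hρ => by have := hμF.2 ρ hρ; linarith⟩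
    have h1 := Real.tendsto_exp_atBot.comp
      (hL.atTop_mul_neg hlt ((hdot ν).sub (hdot μ)))
    refine h1.congr fun m => ?_
    have hl : Real.log (t m) ≠ 0 := (Real.log_pos (ht1 m)).ne'
    have hs : ∀ ρ, Real.log (t m) * dot (fun i => Real.log (x m i) / Real.log (t m)) ρ
        = dot (fun i => Real.log (x m i)) ρ := by
      intro ρ
      simp only [dot, Finset.mul_sum]
      exact Finset.sum_congr rfl fun i _ => by field_simp
    simp only [Function.comp, mul_sub, hs]
    rw [Real.exp_sub, aux_mono _ _ (hx m), aux_mono _ _ (hx m)]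
  have hsum : Tendsto (fun m => ∑ ν ∈ g.supp, if ν ∈ g.faceAt w then 0 else
      g.coeff ν * (mono (x m) ν / mono (x m) μ)) atTop (nhds (∑ ν ∈ g.supp, 0)) := by
    refine tendsto_finsetSum _ fun ν hν => ?_
    by_cases h : ν ∈ g.faceAt w
    · simp [h]
    · simpa [h] using (hlim ν hν h).const_mul (g.coeff ν)
  rw [Finset.sum_const_zero] at hsum
  obtain ⟨m, hm⟩ := (hsum.eventually (lt_mem_nhds (neg_lt_zero.mpr hε))).exists
  have hpos : 0 < mono (x m) μ := by rw [aux_mono _ _ (hx m)]; positivity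
  have h1 := hle (x m) (hx m) μ (by simp [restSupp, hμ, hμF])
  rw [aux_evalVec] at h1
  have h2 : g.eval (x m) = g.evalOn (g.faceAt w) (x m) + (∑ ν ∈ g.supp,
      if ν ∈ g.faceAt w then 0 else
      g.coeff ν * (mono (x m) ν / mono (x m) μ)) * mono (x m) μ := by
    unfold eval evalOn
    rw [Finset.sum_mul, ← Finset.sum_add_distrib]
    refine Finset.sum_congr rfl fun ν _ => ?_
    by_cases h : ν ∈ g.faceAt w
    · simp [h]
    · simp only [h, if_false]
      field_simp
      simp
  have h3 := hneg m
  have h4 := mul_lt_mul_of_pos_right hm hpos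
  linarith

end Signomial

open Signomial in
/-- If each `fᵢ` satisfies the non-boundary condition (NB) for all faces of
its Newton polytope, then `Trop(S(f₁, …, f_k)) ⊆ ⋂ᵢ Σ(fᵢ)`. -/
theorem trop_subset_actualNegCones {n k : ℕ} (f : Fin k → Signomial n)
    (hNB : ∀ i, NBcond (f i)) :
    trop (negSet f) ⊆ ⋂ i, actualNegCone₁ (f i) := by
  rintro w ⟨x, t, hx, ht1, ht, hw⟩
  rw [Set.mem_iInter]
  intro i
  exact aux_main (f i) (hNB i) w x t (fun m => (hx m).1) (fun m => (hx m).2 i) ht1 ht hw
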